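/- arXiv:2006.01330 — 2 statements merged into one kernel-verified Lean document; each statement's English description precedes it below -/
import Mathlib

section
/- Let (A, m) be a one-dimensional Noetherian local ring. Then A is a weakly Arf ring if and only if the m-adic completion Â of A is a weakly Arf ring. -/
open scoped TensorProduct

/-- `A` is a *weakly Arf ring*: whenever `x, y, z ∈ A` with `x` a non-zerodivisor on `A`
and the fractions `y/x` and `z/x` in the total ring of fractions `Q(A)` are integral
over `A`, then `y * z ∈ x A`. -/
def IsWeaklyArfRing (A : Type*) [CommRing A] : Prop :=
  ∀ (x y z : A) (hx : x ∈ nonZeroDivisors A),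
    IsIntegral A (IsLocalization.mk' (FractionRing A) y
      (⟨x, hx⟩ : nonZeroDivisors A)) →
    IsIntegral A (IsLocalization.mk' (FractionRing A) z
      (⟨x, hx⟩ : nonZeroDivisors A)) →
    y * z ∈ Ideal.span {x}

/-!
For a non-zerodivisor `x`, the fraction `y / x` is integral over `A` if and only if `(x)` is a
reduction of `(x, y)`, that is `(x, y) ^ (n + 1) ≤ (x) * (x, y) ^ n` for some `n`. This condition
only involves ideals, so it both ascends and descends along a faithfully flat map `A → B`, and hence
`A` is weakly Arf whenever `B` is.

For the converse, let `B` be the completion. It has dimension at most one, so every non-zerodivisor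
`x` of `B` generates an ideal containing a power of the maximal ideal. By density of `A` in `B`
there is `r` in `A` with `(r) = (x)`, and `y`, `z` are congruent modulo `(x)` to elements `b`, `c`
of `A`. Then `(x, y)` and `(x, z)` are the extensions of `(r, b)` and `(r, c)`, so the weakly Arf
property of `A` gives `b * c ∈ (r)`, and `y * z` is congruent to `b * c` modulo `(x)`.
-/

open scoped nonZeroDivisors

section Reduction

theorem sup_pow_succ_le {R : Type*} [CommSemiring R] (J K : Ideal R) (n : ℕ) :
    (J ⊔ K) ^ (n + 1) ≤ J * (J ⊔ K) ^ n ⊔ K ^ (n + 1) := by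
  induction n with
  | zero => simp
  | succ n ih =>
    calc (J ⊔ K) ^ (n + 2) = (J ⊔ K) ^ (n + 1) * J ⊔ (J ⊔ K) ^ (n + 1) * K := by
          rw [pow_succ, Ideal.mul_sup]
      _ ≤ (J ⊔ K) ^ (n + 1) * J ⊔ (J * (J ⊔ K) ^ n ⊔ K ^ (n + 1)) * K :=
          sup_le_sup_left (Ideal.mul_mono_left ih) _
      _ ≤ J * (J ⊔ K) ^ (n + 1) ⊔ K ^ (n + 2) := by
          rw [Ideal.sup_mul, ← pow_succ, mul_comm _ J, mul_assoc]
          refine sup_le le_sup_left (sup_le_sup_right (Ideal.mul_mono_right ?_) _)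
          rw [pow_succ]
          exact Ideal.mul_mono_right le_sup_right

variable {A : Type*} [CommRing A]

/-- The ideal `J` is a reduction of the ideal `I`, in the sense of Northcott and Rees. The inclusion
`I ^ (n + 1) ≤ J * I ^ n` is the usual equality, its reverse being automatic for `J ≤ I`. -/
def IsReduction (J I : Ideal A) : Prop :=
  J ≤ I ∧ ∃ n : ℕ, I ^ (n + 1) ≤ J * I ^ n

theorem isReduction_span_singleton_span_pair_iff {x y : A} :
    IsReduction (Ideal.span {x}) (Ideal.span {x, y}) ↔
      ∃ n : ℕ, y ^ (n + 1) ∈ Ideal.span {x} * Ideal.span {x, y} ^ n := by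
  have hsup : Ideal.span {x, y} = Ideal.span {x} ⊔ Ideal.span {y} := Ideal.span_insert x {y}
  refine ⟨fun ⟨_, n, hn⟩ ↦ ⟨n, hn (Ideal.pow_mem_pow (Ideal.subset_span (by simp)) _)⟩,
    fun ⟨n, hn⟩ ↦ ⟨hsup ▸ le_sup_left, n, ?_⟩⟩
  calc Ideal.span {x, y} ^ (n + 1)
      ≤ Ideal.span {x} * Ideal.span {x, y} ^ n ⊔ Ideal.span {y} ^ (n + 1) := by
        rw [hsup]
        exact sup_pow_succ_le _ _ n
    _ ≤ Ideal.span {x} * Ideal.span {x, y} ^ n := by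
        rw [Ideal.span_singleton_pow]
        exact sup_le le_rfl ((Ideal.span_singleton_le_iff_mem _).mpr hn)

end Reduction

section Integrality

theorem isIntegral_of_mul_mem_of_mem_nonZeroDivisors {R S : Type*} [CommRing R] [CommRing S]
    [Algebra R S] {N : Submodule R S} (hN : N.FG) {t : S} (ht : ∀ v ∈ N, t * v ∈ N) {u : S}
    (huN : u ∈ N) (hu : u ∈ S⁰) : IsIntegral R t := by
  have : Module.Finite R N := .of_fg hN
  let f : Module.End R N := (LinearMap.mulLeft R t).restrict ht
  have aeval_f (p : Polynomial R) (v : N) :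
      (Polynomial.aeval f p v : S) = Polynomial.aeval t p * v := by
    induction p using Polynomial.induction_on' generalizing v with
    | add p q hp hq => simp [hp, hq, add_mul]
    | monomial n a =>
      have hpow : ((f ^ n) v : S) = t ^ n * v := by
        induction n with
        | zero => simp
        | succ n ih => rw [pow_succ', Module.End.mul_apply, pow_succ', mul_assoc, ← ih]; rfl
      simp [Polynomial.aeval_monomial, Algebra.smul_def, hpow, mul_assoc]
  obtain ⟨p, hp, hpf⟩ := LinearMap.exists_monic_and_aeval_eq_zero R f
  refine ⟨p, hp, ?_⟩
  rw [← Polynomial.aeval_def]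
  refine (mul_right_mem_nonZeroDivisors_eq_zero_iff hu).mp ?_
  rw [← aeval_f p ⟨u, huN⟩, hpf]
  rfl

variable {A : Type*} [CommRing A] {M : Submonoid A} (K : Type*) [CommRing K] [Algebra A K]
  [IsLocalization M K] {s : M} {y : A}

theorem IsReduction.isIntegral_mk'
    (h : IsReduction (Ideal.span {(s : A)}) (Ideal.span {(s : A), y})) :
    IsIntegral A (IsLocalization.mk' K y s) := by
  obtain ⟨hsI, n, hn⟩ := h
  set I : Ideal A := Ideal.span {(s : A), y}
  have hyI : y ∈ I := Ideal.subset_span (by simp)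
  have hIn : (I ^ n).FG := Ideal.FG.pow (Submodule.fg_span (by simp))
  have hsn : (s : A) ^ n ∈ I ^ n := Ideal.pow_mem_pow (hsI (Ideal.mem_span_singleton_self _)) n
  -- `y / s` maps the image of `I ^ n` in `K` to itself, and this image contains the unit `s ^ n`.
  refine isIntegral_of_mul_mem_of_mem_nonZeroDivisors
    (Submodule.FG.map (Algebra.linearMap A K) hIn) ?_ (Submodule.mem_map_of_mem hsn) ?_
  · rintro _ ⟨u, hu, rfl⟩
    have hyu : y * u ∈ Ideal.span {(s : A)} * I ^ n :=
      hn (pow_succ' I n ▸ Ideal.mul_mem_mul hyI hu)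
    obtain ⟨v, hv, hvu⟩ := Ideal.mem_span_singleton_mul.mp hyu
    refine ⟨v, hv, ?_⟩
    rw [Algebra.linearMap_apply, Algebra.linearMap_apply, mul_comm,
      IsLocalization.mul_mk'_eq_mk'_of_mul, mul_comm, ← hvu, IsLocalization.mk'_mul_cancel_left]
  · rw [Algebra.linearMap_apply, map_pow]
    exact ((IsLocalization.map_units K s).pow n).mem_nonZeroDivisors

theorem isReduction_of_isIntegral_mk' (hM : M ≤ A⁰)
    (h : IsIntegral A (IsLocalization.mk' K y s)) :
    IsReduction (Ideal.span {(s : A)}) (Ideal.span {(s : A), y}) := by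
  obtain ⟨p, hp, hpy⟩ := h
  have hroot : (p.scaleRoots s).eval y = 0 := by
    apply IsLocalization.injective K hM
    rw [map_zero, ← Polynomial.aeval_algebraMap_apply_eq_algebraMap_eval]
    exact scaleRoots_aeval_eq_zero_of_aeval_mk'_eq_zero hpy
  rw [Polynomial.eval_eq_sum_range, Polynomial.natDegree_scaleRoots, Finset.sum_range_succ,
    Polynomial.coeff_scaleRoots_natDegree, hp.leadingCoeff, one_mul] at hroot
  rw [isReduction_span_singleton_span_pair_iff]
  refine ⟨p.natDegree, ?_⟩
  rw [pow_succ', eq_neg_of_add_eq_zero_right hroot, mul_neg, neg_mem_iff, Finset.mul_sum]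
  refine Ideal.sum_mem _ fun i hi ↦ ?_
  obtain ⟨k, hk⟩ := Nat.exists_eq_add_of_lt (Finset.mem_range.mp hi)
  have hterm : y * ((p.scaleRoots s).coeff i * y ^ i) =
      p.coeff i * (s * (s ^ k * y ^ (i + 1))) := by
    rw [Polynomial.coeff_scaleRoots, show p.natDegree - i = k + 1 by lia]
    ring
  rw [hterm, show p.natDegree = k + (i + 1) by lia, pow_add]
  refine Ideal.mul_mem_left _ _ (Ideal.mul_mem_mul (Ideal.mem_span_singleton_self _)
    (Ideal.mul_mem_mul ?_ ?_)) <;>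
  exact Ideal.pow_mem_pow (Ideal.subset_span (by simp)) _

theorem isIntegral_mk'_iff_isReduction (hM : M ≤ A⁰) :
    IsIntegral A (IsLocalization.mk' K y s) ↔
      IsReduction (Ideal.span {(s : A)}) (Ideal.span {(s : A), y}) :=
  ⟨isReduction_of_isIntegral_mk' K hM, IsReduction.isIntegral_mk' K⟩

theorem isWeaklyArfRing_iff_isReduction :
    IsWeaklyArfRing A ↔ ∀ x y z : A, x ∈ A⁰ →
      IsReduction (Ideal.span {x}) (Ideal.span {x, y}) →
      IsReduction (Ideal.span {x}) (Ideal.span {x, z}) → y * z ∈ Ideal.span {x} := by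
  simp only [IsWeaklyArfRing, isIntegral_mk'_iff_isReduction _ le_rfl]

end Integrality

section SpanPair

variable {A : Type*} [CommRing A] {x r y b : A}

theorem span_singleton_eq_of_sub_mem_mul_jacobson
    (h : x - r ∈ Ideal.span {x} * Ideal.jacobson ⊥) : Ideal.span {r} = Ideal.span {x} := by
  obtain ⟨j, hj, hjx⟩ := Ideal.mem_span_singleton_mul.mp h
  have hunit : IsUnit (1 - j) := Ideal.isUnit_of_sub_one_mem_jacobson_bot _ (by simpa using hj)
  rw [show r = x * (1 - j) by linear_combination hjx,
    Ideal.span_singleton_mul_right_unit hunit]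

theorem span_pair_eq_of_span_singleton_eq_of_sub_mem (hr : Ideal.span {r} = Ideal.span {x})
    (hb : y - b ∈ Ideal.span {x}) : Ideal.span {r, b} = Ideal.span {x, y} := by
  obtain ⟨a, ha⟩ := Ideal.mem_span_singleton'.mp hb
  rw [show y = b + a * x by linear_combination -ha, Ideal.span_pair_add_mul_left,
    Ideal.span_insert, hr, ← Ideal.span_insert]

end SpanPair

section FaithfullyFlat

variable {A B : Type*} [CommRing A] [CommRing B] [Algebra A B] [Module.FaithfullyFlat A B]

theorem isReduction_map_iff_of_faithfullyFlat {J I : Ideal A} :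
    IsReduction (J.map (algebraMap A B)) (I.map (algebraMap A B)) ↔ IsReduction J I := by
  have hle (J I : Ideal A) : J.map (algebraMap A B) ≤ I.map (algebraMap A B) ↔ J ≤ I := by
    rw [Ideal.map_le_iff_le_comap, Ideal.comap_map_eq_self_of_faithfullyFlat]
  simp only [IsReduction, ← Ideal.map_pow, ← Ideal.map_mul, hle]

theorem isReduction_span_algebraMap_iff_of_faithfullyFlat {x y : A} :
    IsReduction (Ideal.span {algebraMap A B x}) (Ideal.span {algebraMap A B x, algebraMap A B y}) ↔
      IsReduction (Ideal.span {x}) (Ideal.span {x, y}) := by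
  rw [← isReduction_map_iff_of_faithfullyFlat (A := A) (B := B), Ideal.map_span, Ideal.map_span,
    Set.image_pair, Set.image_singleton]

theorem algebraMap_mem_span_singleton_iff_of_faithfullyFlat {x y : A} :
    algebraMap A B y ∈ Ideal.span {algebraMap A B x} ↔ y ∈ Ideal.span {x} := by
  rw [← Set.image_singleton, ← Ideal.map_span, ← Ideal.mem_comap,
    Ideal.comap_map_eq_self_of_faithfullyFlat]

theorem algebraMap_mem_nonZeroDivisors_iff_of_faithfullyFlat {x : A} :
    algebraMap A B x ∈ B⁰ ↔ x ∈ A⁰ := by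
  refine ⟨mem_nonZeroDivisors_of_injective (FaithfulSMul.algebraMap_injective A B), fun hx ↦ ?_⟩
  rw [mem_nonZeroDivisors_iff_left]
  intro b hb
  apply Module.Flat.isSMulRegular_of_nonZeroDivisors (M := B) hx
  simpa [Algebra.smul_def] using hb

theorem IsWeaklyArfRing.of_faithfullyFlat (hB : IsWeaklyArfRing B) : IsWeaklyArfRing A := by
  rw [isWeaklyArfRing_iff_isReduction] at hB ⊢
  intro x y z hx hy hz
  rw [← algebraMap_mem_span_singleton_iff_of_faithfullyFlat (B := B), map_mul]
  exact hB _ _ _ (algebraMap_mem_nonZeroDivisors_iff_of_faithfullyFlat.mpr hx)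
    (isReduction_span_algebraMap_iff_of_faithfullyFlat.mpr hy)
    (isReduction_span_algebraMap_iff_of_faithfullyFlat.mpr hz)

theorem isWeaklyArfRing_iff_of_faithfullyFlat
    (happrox : ∀ x ∈ B⁰, ∀ b : B, ∃ r : A,
      b - algebraMap A B r ∈ Ideal.span {x} * Ideal.jacobson ⊥) :
    IsWeaklyArfRing A ↔ IsWeaklyArfRing B := by
  refine ⟨fun hA ↦ ?_, IsWeaklyArfRing.of_faithfullyFlat⟩
  rw [isWeaklyArfRing_iff_isReduction] at hA ⊢
  intro x y z hx hy hz
  obtain ⟨r, hr⟩ := happrox x hx x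
  obtain ⟨b, hb⟩ := happrox x hx y
  obtain ⟨c, hc⟩ := happrox x hx z
  replace hb : y - algebraMap A B b ∈ Ideal.span {x} := Ideal.mul_le_left hb
  replace hc : z - algebraMap A B c ∈ Ideal.span {x} := Ideal.mul_le_left hc
  have hrx : Ideal.span {algebraMap A B r} = Ideal.span {x} :=
    span_singleton_eq_of_sub_mem_mul_jacobson hr
  have hrA : r ∈ A⁰ := by
    obtain ⟨d, rfl⟩ : algebraMap A B r ∣ x := Ideal.span_singleton_le_span_singleton.mp hrx.ge
    exact algebraMap_mem_nonZeroDivisors_iff_of_faithfullyFlat.mp (mul_mem_nonZeroDivisors.mp hx).1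
  have hbc : b * c ∈ Ideal.span {r} := by
    refine hA r b c hrA ?_ ?_ <;> rw [← isReduction_span_algebraMap_iff_of_faithfullyFlat (B := B)]
    · rwa [hrx, span_pair_eq_of_span_singleton_eq_of_sub_mem hrx hb]
    · rwa [hrx, span_pair_eq_of_span_singleton_eq_of_sub_mem hrx hc]
  rw [← algebraMap_mem_span_singleton_iff_of_faithfullyFlat (B := B), hrx, map_mul] at hbc
  rw [show y * z = algebraMap A B b * algebraMap A B c +
    ((y - algebraMap A B b) * z + algebraMap A B b * (z - algebraMap A B c)) by ring]
  exact add_mem hbc (add_mem (Ideal.mul_mem_right _ _ hb) (Ideal.mul_mem_left _ _ hc))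

end FaithfullyFlat

section AdicCompletion

variable {R : Type*} [CommRing R] {I : Ideal R}

theorem exists_sub_algebraMap_mem_map_adicCompletion (hI : I.FG) (b : AdicCompletion I R) :
    ∃ r : R, b - algebraMap R (AdicCompletion I R) r ∈
      I.map (algebraMap R (AdicCompletion I R)) := by
  obtain ⟨r, hr⟩ := Ideal.Quotient.mk_surjective (AdicCompletion.evalOneₐ I b)
  refine ⟨r, ?_⟩
  rw [← AdicCompletion.ker_evalOneₐ_eq_map I hI, RingHom.mem_ker, map_sub, sub_eq_zero]
  exact hr.symm.trans ((AdicCompletion.evalOneₐ I).commutes r).symm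

variable {S : Type*} [CommRing S]

theorem exists_ringHom_adicCompletion_comp_algebraMap (I : Ideal R) (f : R →+* S)
    [IsAdicComplete (I.map f) S] :
    ∃ g : AdicCompletion I R →+* S, g.comp (algebraMap R (AdicCompletion I R)) = f := by
  have hpow (n : ℕ) : I ^ n ≤ (I.map f ^ n).comap f := by
    rw [← Ideal.map_le_iff_le_comap, Ideal.map_pow]
  let φ (n : ℕ) : AdicCompletion I R →+* S ⧸ I.map f ^ n :=
    (Ideal.quotientMap (I.map f ^ n) f (hpow n)).comp (AdicCompletion.evalₐ I n).toRingHom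
  have hφ {m n : ℕ} (hmn : m ≤ n) : (Ideal.Quotient.factorPow (I.map f) hmn).comp (φ n) = φ m := by
    ext x
    induction x using AdicCompletion.induction_on with
    | h r =>
      have hr := congrArg (Ideal.quotientMap (I.map f ^ m) f (hpow m))
        (AdicCompletion.Ideal.mk_eq_mk I hmn r)
      simpa [φ] using hr
  refine ⟨IsAdicComplete.liftRingHom (I.map f) φ hφ, ?_⟩
  apply DFunLike.coe_injective
  refine IsHausdorff.funext' (I.map f) fun n r ↦ ?_
  rw [RingHom.comp_apply, IsAdicComplete.mk_liftRingHom]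
  simp [φ, AdicCompletion.algebraMap_apply]

theorem exists_surjective_ringHom_of_adicCompletion (hI : I.FG) (f : R →+* S)
    [IsAdicComplete (I.map f) S]
    (hf : Function.Surjective ((Ideal.Quotient.mk (I.map f)).comp f)) :
    ∃ g : AdicCompletion I R →+* S, Function.Surjective g := by
  obtain ⟨g, hgf⟩ := exists_ringHom_adicCompletion_comp_algebraMap I f
  let J : Ideal (AdicCompletion I R) := I.map (algebraMap R (AdicCompletion I R))
  have hJ : J.map g = I.map f := by rw [Ideal.map_map, hgf]
  have : IsAdicComplete J (AdicCompletion I R) := AdicCompletion.isAdicComplete_self I hI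
  have : IsHausdorff (J.map g) S := hJ ▸ inferInstance
  refine ⟨g, surjective_of_mk_map_comp_surjective (I := J) g ?_⟩
  rw [hJ]
  refine .of_comp (g := algebraMap R (AdicCompletion I R)) ?_
  rwa [← RingHom.coe_comp, RingHom.comp_assoc, hgf]

theorem isNoetherianRing_of_isAdicComplete_map [IsNoetherianRing R] (I : Ideal R) (f : R →+* S)
    [IsAdicComplete (I.map f) S]
    (hf : Function.Surjective ((Ideal.Quotient.mk (I.map f)).comp f)) : IsNoetherianRing S := by
  -- Sending variables to generators of `I` makes `S` a quotient of a power series ring over `R`.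
  obtain ⟨n, a, ha⟩ := Submodule.fg_iff_exists_fin_generating_family.mp (IsNoetherian.noetherian I)
  let φ : MvPolynomial (Fin n) R →+* S := MvPolynomial.eval₂Hom f (f ∘ a)
  let J : Ideal (MvPolynomial (Fin n) R) := MvPolynomial.idealOfVars (Fin n) R
  have hJ : J.map φ = I.map f := by
    have hφX : φ ∘ MvPolynomial.X = f ∘ a := by
      ext
      simp [φ]
    rw [show J = Ideal.span (Set.range MvPolynomial.X) from rfl, Ideal.map_span, ← ha,
      Ideal.submodule_span_eq, Ideal.map_span, ← Set.range_comp, ← Set.range_comp, hφX]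
  have : IsAdicComplete (J.map φ) S := hJ ▸ inferInstance
  have hφ : Function.Surjective ((Ideal.Quotient.mk (J.map φ)).comp φ) := by
    have hφC : φ.comp MvPolynomial.C = f := MvPolynomial.eval₂Hom_comp_C _ _
    rw [hJ]
    refine .of_comp (g := MvPolynomial.C) ?_
    rwa [← RingHom.coe_comp, RingHom.comp_assoc, hφC]
  obtain ⟨g, hg⟩ :=
    exists_surjective_ringHom_of_adicCompletion (MvPolynomial.idealOfVars_fg _ _) φ hφ
  have : IsNoetherianRing (AdicCompletion J (MvPolynomial (Fin n) R)) :=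
    isNoetherianRing_of_ringEquiv _ (MvPowerSeries.toAdicCompletionAlgEquiv (Fin n) R).toRingEquiv
  exact isNoetherianRing_of_surjective _ _ g hg

theorem isNoetherianRing_adicCompletion [IsNoetherianRing R] (I : Ideal R) :
    IsNoetherianRing (AdicCompletion I R) := by
  have hI : I.FG := IsNoetherian.noetherian I
  have := AdicCompletion.isAdicComplete_self I hI
  refine isNoetherianRing_of_isAdicComplete_map I (algebraMap R (AdicCompletion I R)) fun y ↦ ?_
  obtain ⟨b, rfl⟩ := Ideal.Quotient.mk_surjective y
  obtain ⟨r, hr⟩ := exists_sub_algebraMap_mem_map_adicCompletion hI b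
  exact ⟨r, (Ideal.Quotient.eq.mpr hr).symm⟩

end AdicCompletion

section LocalRing

open IsLocalRing

theorem exists_maximalIdeal_pow_le_span_singleton {B : Type*} [CommRing B] [IsNoetherianRing B]
    [IsLocalRing B] (hdim : ringKrullDim B ≤ 1) {x : B} (hx : x ∈ B⁰) :
    ∃ n : ℕ, maximalIdeal B ^ n ≤ Ideal.span {x} := by
  have hheight : (maximalIdeal B).height ≤ 1 := by
    rw [← maximalIdeal_height_eq_ringKrullDim] at hdim
    exact_mod_cast hdim
  apply Ideal.exists_pow_le_of_le_radical_of_fg _ (IsNoetherian.noetherian _)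
  rw [Ideal.radical_eq_sInf]
  refine le_sInf fun p ⟨hxp, hp⟩ ↦ ?_
  have hp_height : 1 ≤ p.height :=
    (Ideal.one_le_height_span_singleton_of_mem_nonZeroDivisors hx).trans (Ideal.height_mono hxp)
  exact (Ideal.eq_of_le_of_height_le _ (le_maximalIdeal hp.ne_top) (hheight.trans hp_height)).ge

theorem sup_pow_smul_top_eq_top {R M : Type*} [CommSemiring R] [AddCommMonoid M] [Module R M]
    {I : Ideal R} {N : Submodule R M} (h : N ⊔ I • ⊤ = ⊤) (n : ℕ) : N ⊔ I ^ n • ⊤ = ⊤ := by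
  induction n with
  | zero => simp
  | succ n ih =>
    rw [eq_top_iff]
    calc ⊤ = N ⊔ I ^ n • (N ⊔ I • ⊤) := by rw [h, ih]
      _ ≤ N ⊔ I ^ (n + 1) • ⊤ := by
        have hN : N ⊔ I ^ n • N = N := sup_eq_left.mpr Submodule.smul_le_right
        rw [Submodule.smul_sup, ← sup_assoc, hN, ← Submodule.mul_smul, pow_succ]

theorem exists_sub_algebraMap_mem_map_pow {A B : Type*} [CommRing A] [CommRing B] [Algebra A B]
    {I : Ideal A} (h : ∀ b : B, ∃ r : A, b - algebraMap A B r ∈ I.map (algebraMap A B)) (n : ℕ)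
    (b : B) : ∃ r : A, b - algebraMap A B r ∈ I.map (algebraMap A B) ^ n := by
  have hsup (J : Ideal A) : LinearMap.range (Algebra.linearMap A B) ⊔ J • ⊤ = ⊤ ↔
      ∀ b : B, ∃ r : A, b - algebraMap A B r ∈ J.map (algebraMap A B) := by
    simp only [Submodule.eq_top_iff', Submodule.mem_sup, Ideal.smul_top_eq_map]
    refine forall_congr' fun b ↦ ⟨?_, fun ⟨r, hr⟩ ↦ ⟨_, ⟨r, rfl⟩, _, hr, by simp⟩⟩
    rintro ⟨_, ⟨r, rfl⟩, c, hc, rfl⟩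
    exact ⟨r, by simpa using hc⟩
  rw [← Ideal.map_pow]
  exact (hsup _).mp (sup_pow_smul_top_eq_top ((hsup I).mpr h) n) b

variable {A B : Type*} [CommRing A] [IsLocalRing A] [CommRing B] [IsLocalRing B] [Algebra A B]

theorem isLocalHom_of_maximalIdeal_eq_map
    (hmax : maximalIdeal B = (maximalIdeal A).map (algebraMap A B)) :
    IsLocalHom (algebraMap A B) :=
  ((local_hom_TFAE (algebraMap A B)).out 0 2).mpr hmax.ge

variable [IsNoetherianRing A] [IsNoetherianRing B]

theorem ringKrullDim_le_of_maximalIdeal_eq_map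
    (hmax : maximalIdeal B = (maximalIdeal A).map (algebraMap A B)) :
    ringKrullDim B ≤ ringKrullDim A := by
  have := isLocalHom_of_maximalIdeal_eq_map hmax
  have hheight := Ideal.height_le_height_add_of_liesOver (maximalIdeal A) (maximalIdeal B)
  rw [← hmax, Ideal.map_quotient_self, Ideal.height_bot, add_zero] at hheight
  rw [← maximalIdeal_height_eq_ringKrullDim, ← maximalIdeal_height_eq_ringKrullDim]
  exact_mod_cast hheight

theorem weaklyArf_iff_completion_general [Module.Flat A B] (hdim : ringKrullDim A ≤ 1)
    (hmax : maximalIdeal B = (maximalIdeal A).map (algebraMap A B))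
    (hres : ∀ b : B, ∃ r : A, b - algebraMap A B r ∈ (maximalIdeal A).map (algebraMap A B)) :
    IsWeaklyArfRing A ↔ IsWeaklyArfRing B := by
  have := isLocalHom_of_maximalIdeal_eq_map hmax
  have : Module.FaithfullyFlat A B := .of_flat_of_isLocalHom
  refine isWeaklyArfRing_iff_of_faithfullyFlat fun x hx b ↦ ?_
  obtain ⟨n, hn⟩ := exists_maximalIdeal_pow_le_span_singleton
    ((ringKrullDim_le_of_maximalIdeal_eq_map hmax).trans hdim) hx
  obtain ⟨r, hr⟩ := exists_sub_algebraMap_mem_map_pow hres (n + 1) b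
  refine ⟨r, ?_⟩
  rw [jacobson_eq_maximalIdeal ⊥ bot_ne_top]
  rw [← hmax, pow_succ] at hr
  exact Ideal.mul_mono_left hn hr

end LocalRing

/-- A one-dimensional Noetherian local ring `A` is weakly Arf iff its `m`-adic
completion `Â` is weakly Arf. -/
theorem weaklyArf_iff_completion (A : Type*) [CommRing A] [IsNoetherianRing A]
    [IsLocalRing A] (hdim : ringKrullDim A = 1) :
    IsWeaklyArfRing A ↔
      IsWeaklyArfRing (AdicCompletion (IsLocalRing.maximalIdeal A) A) := by
  have := isNoetherianRing_adicCompletion (IsLocalRing.maximalIdeal A)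
  exact weaklyArf_iff_completion_general hdim.le AdicCompletion.maximalIdeal_eq_map
    (exists_sub_algebraMap_mem_map_adicCompletion (IsNoetherian.noetherian _))
end

section
/- Let A be a Noetherian ring satisfying Serre's condition (S₁) and let S be a multiplicatively closed subset of A. Then (S⁻¹A)* = S⁻¹(A*) inside Q(S⁻¹A), where Q(S⁻¹A) is identified with S⁻¹Q(A) and the integral closure of S⁻¹A in Q(S⁻¹A) with S⁻¹Ā. -/
open scoped TensorProduct

set_option synthInstance.maxHeartbeats 1000000 in
set_option maxHeartbeats 2000000 in
/-- The strict closure `A*` of `A` in the integral closure `Ā` of `A` in its total ring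
of fractions `Q(A)`: the set of `x ∈ Ā` such that `x ⊗ 1 = 1 ⊗ x` in `Ā ⊗_A Ā`. -/
def strictClosureSet (A : Type*) [CommRing A] : Set (FractionRing A) :=
  {x | ∃ hx : x ∈ integralClosure A (FractionRing A),
    ((⟨x, hx⟩ : integralClosure A (FractionRing A)) ⊗ₜ[A]
        (1 : integralClosure A (FractionRing A)) :
      TensorProduct A (integralClosure A (FractionRing A))
        (integralClosure A (FractionRing A))) =
    (1 : integralClosure A (FractionRing A)) ⊗ₜ[A]
        (⟨x, hx⟩ : integralClosure A (FractionRing A))}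

/-- `A` is strictly closed in `Ā`, i.e. `A = A*`. -/
def IsStrictlyClosed (A : Type*) [CommRing A] : Prop :=
  ∀ x ∈ strictClosureSet A, ∃ a : A, algebraMap A (FractionRing A) a = x

/-- `xs` is a regular sequence on `R`: for each `i`, the element `xs i` acts injectively
on `R / (xs 0, …, xs (i-1))`. -/
def IsRegularSeq (R : Type*) [CommRing R] (xs : List R) : Prop :=
  ∀ (i : ℕ) (h : i < xs.length),
    IsSMulRegular (R ⧸ Ideal.span {y : R | y ∈ xs.take i}) (xs.get ⟨i, h⟩)

/-- For a Noetherian local ring `R`, `depth R ≥ n` holds iff there is a regular sequence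
of length `n` consisting of elements of the maximal ideal. -/
def RingDepthGE (R : Type*) [CommRing R] [IsLocalRing R] (n : ℕ) : Prop :=
  ∃ xs : List R, xs.length = n ∧ (∀ x ∈ xs, x ∈ IsLocalRing.maximalIdeal R) ∧
    IsRegularSeq R xs

/-- Serre's condition `(S_n)`: `depth A_P ≥ min (n, dim A_P)` for every prime ideal `P`
of `A`. -/
def SerreSCondition (A : Type*) [CommRing A] (n : ℕ) : Prop :=
  ∀ (P : Ideal A) [P.IsPrime], ∀ k : ℕ, k ≤ n →
    (k : WithBot (WithTop ℕ)) ≤ ringKrullDim (Localization.AtPrime P) →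
    RingDepthGE (Localization.AtPrime P) k

/-!
Strict closure is an equalizer of two maps into a tensor product, so it commutes with localization,
and so does integral closure. What is left is that `Q(S⁻¹A)` is `S⁻¹Q(A)`. Under `(S₁)` every
associated prime of `A` is minimal, which makes `Q(A)` zero-dimensional. Every `b` in a
zero-dimensional ring satisfies `b ^ n = b ^ (n + 1) * y` for some `n` and `y`, so when `b` becomes
a non-zerodivisor in `S⁻¹A`, cancelling `b ^ n` shows that `b` divides an element of `S` in `Q(A)`.
-/

open scoped nonZeroDivisors

section ZeroDimensional

variable {R : Type*} [CommRing R]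

lemma notMem_nonZeroDivisors_of_mem_associatedPrimes {P : Ideal R} (hP : P ∈ associatedPrimes R R)
    {y : R} (hy : y ∈ P) : y ∉ R⁰ := by
  obtain ⟨hprime, x, rfl⟩ := hP
  intro hreg
  obtain ⟨n, hn⟩ := hy
  have hyx : y ^ n * x = 0 := by simpa [Submodule.mem_colon_singleton] using hn
  have hx : x = 0 := (mul_left_mem_nonZeroDivisors_eq_zero_iff (pow_mem hreg n)).mp hyx
  exact hprime.ne_top (by simp [hx])

lemma RingDepthGE.exists_mem_nonZeroDivisors [IsLocalRing R] (h : RingDepthGE R 1) :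
    ∃ y ∈ IsLocalRing.maximalIdeal R, y ∈ R⁰ := by
  obtain ⟨xs, hlength, hmem, hreg⟩ := h
  obtain ⟨y, rfl⟩ := List.length_eq_one_iff.mp hlength
  refine ⟨y, hmem y (List.mem_singleton_self y), mem_nonZeroDivisors_iff_left.mpr fun x hx ↦ ?_⟩
  have hzero := mem_of_isSMulRegular_quotient_of_smul_mem (hreg 0 (by simp)) (x := x)
  simpa [hx] using hzero

lemma SerreSCondition.associatedPrimes_subset_minimalPrimes (h : SerreSCondition R 1) :
    associatedPrimes R R ⊆ minimalPrimes R := by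
  intro P hP
  have := hP.isPrime
  rw [← Ideal.height_eq_zero_iff]
  by_contra hheight
  have hdim : ((1 : ℕ) : WithBot ℕ∞) ≤ ringKrullDim (Localization.AtPrime P) := by
    rw [IsLocalization.AtPrime.ringKrullDim_eq_height P]
    exact WithBot.coe_le_coe.mpr (Order.one_le_iff_ne_zero.mpr hheight)
  obtain ⟨y, hy, hreg⟩ := (h P 1 le_rfl hdim).exists_mem_nonZeroDivisors
  have hass : IsLocalRing.maximalIdeal (Localization.AtPrime P) ∈
      associatedPrimes (Localization.AtPrime P) (Localization.AtPrime P) :=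
    Module.associatedPrimes.mem_associatedPrimes_atPrime_of_mem_associatedPrimes hP
  exact notMem_nonZeroDivisors_of_mem_associatedPrimes hass hy hreg

lemma krullDimLE_zero_of_associatedPrimes_subset_minimalPrimes [IsNoetherianRing R]
    (K : Type*) [CommRing K] [Algebra R K] [IsFractionRing R K]
    (h : associatedPrimes R R ⊆ minimalPrimes R) : Ring.KrullDimLE 0 K := by
  have : IsNoetherianRing K := IsLocalization.isNoetherianRing R⁰ K inferInstance
  have : IsFractionRing K K := IsFractionRing.idem R K
  refine Ring.KrullDimLE.mk₀ fun Q hQ ↦ ?_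
  obtain ⟨M, hM, hQM⟩ := Q.exists_le_maximal hQ.ne_top
  open Module.associatedPrimes in
  have hass : M.comap (algebraMap R K) ∈ associatedPrimes R R :=
    comap_mem_associatedPrimes_of_mem_associatedPrimes_of_isLocalizedModule_of_fg R⁰
      (Algebra.linearMap R K) M hM.mem_associatedPrimes_of_isFractionRing
      (IsNoetherian.noetherian _)
  have hcomap : M.comap (algebraMap R K) ≤ Q.comap (algebraMap R K) :=
    (h hass).2 ⟨hQ.comap _, bot_le⟩ (Ideal.comap_mono hQM)
  have hMQ : M ≤ Q := (IsLocalization.orderEmbedding R⁰ K).le_iff_le.mp hcomap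
  rwa [le_antisymm hQM hMQ]

lemma exists_pow_eq_pow_succ_mul [Ring.KrullDimLE 0 R] (b : R) :
    ∃ n y, b ^ n = b ^ (n + 1) * y := by
  let T : Submonoid R :=
    { carrier := {r | ∃ n y, r = b ^ n * (1 - b * y)}
      one_mem' := ⟨0, 0, by ring⟩
      mul_mem' := by
        rintro _ _ ⟨m, y, rfl⟩ ⟨n, z, rfl⟩
        exact ⟨m + n, y + z - b * y * z, by ring⟩ }
  suffices h : (0 : R) ∈ T by
    obtain ⟨n, y, hy⟩ := h
    exact ⟨n, y, by linear_combination -hy⟩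
  by_contra h
  obtain ⟨P, hP, -, hdisj⟩ := Ideal.exists_le_prime_disjoint ⊥ T (by simpa using h)
  have hbP : b ∉ P := fun hb ↦ Set.disjoint_left.mp hdisj hb ⟨1, 0, by ring⟩
  obtain ⟨y, z, hz, hyz⟩ := hP.isMaximal'.exists_inv hbP
  exact Set.disjoint_left.mp hdisj hz ⟨0, y, by linear_combination hyz⟩

end ZeroDimensional

section FractionRing

variable {A : Type*} (B K L : Type*) [CommRing A] [CommRing B] [CommRing K] [CommRing L]
  [Algebra A B] [Algebra B L] [Algebra A L] [IsScalarTower A B L]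
  (S : Submonoid A) [IsLocalization S B]

include S in
lemma isLocalization_comap_nonZeroDivisors [IsFractionRing B L] :
    IsLocalization (B⁰.comap (algebraMap A B)) L :=
  IsLocalization.localization_localization_isLocalization_of_has_all_units S B⁰ L
    fun _ h ↦ h.mem_nonZeroDivisors

include S in
lemma nonZeroDivisors_le_comap_nonZeroDivisors : A⁰ ≤ B⁰.comap (algebraMap A B) :=
  Submonoid.map_le_iff_le_comap.mp (IsLocalization.map_nonZeroDivisors_le S B)

variable {B} [Algebra A K] [IsFractionRing A K]

lemma exists_algebraMap_dvd_of_mem_nonZeroDivisors [Ring.KrullDimLE 0 K] {b : A}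
    (hb : algebraMap A B b ∈ B⁰) : ∃ s ∈ S, algebraMap A K b ∣ algebraMap A K s := by
  obtain ⟨n, y, hy⟩ := exists_pow_eq_pow_succ_mul (algebraMap A K b)
  obtain ⟨⟨c, t⟩, hct⟩ := IsLocalization.surj A⁰ y
  have hA : b ^ n * t = b ^ n * (b * c) := by
    apply IsFractionRing.injective A K
    simp only [map_mul, map_pow, ← hct]
    linear_combination algebraMap A K t * hy
  have hB : algebraMap A B t = algebraMap A B (b * c) := by
    refine (mul_cancel_left_mem_nonZeroDivisors (pow_mem hb n)).mp ?_
    simpa only [map_mul, map_pow] using congrArg (algebraMap A B) hA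
  obtain ⟨s, hs⟩ := (IsLocalization.eq_iff_exists S B).mp hB
  refine ⟨s, s.2, algebraMap A K s * y, (IsLocalization.map_units K t).mul_left_inj.mp ?_⟩
  rw [← map_mul, hs, mul_assoc, mul_assoc, hct]
  simp only [map_mul]
  ring

variable (B) [Algebra K L] [IsScalarTower A K L]

theorem isLocalization_algebraMapSubmonoid_fractionRing [IsFractionRing B L]
    [Ring.KrullDimLE 0 K] : IsLocalization (Algebra.algebraMapSubmonoid K S) L := by
  have := isLocalization_comap_nonZeroDivisors B L S
  have hS : S ≤ B⁰.comap (algebraMap A B) := fun s hs ↦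
    (IsLocalization.map_units B ⟨s, hs⟩).mem_nonZeroDivisors
  refine (IsLocalization.iff_of_le_of_exists_dvd _ _ (Submonoid.monotone_map hS) ?_).mpr
    (IsLocalization.isLocalization_of_submonoid_le K L A⁰ _
      (nonZeroDivisors_le_comap_nonZeroDivisors B S))
  rintro _ ⟨b, hb, rfl⟩
  obtain ⟨s, hs, hdvd⟩ := exists_algebraMap_dvd_of_mem_nonZeroDivisors K S hb
  exact ⟨_, ⟨s, hs, rfl⟩, hdvd⟩

end FractionRing

/-- The strict closure of `A` in an `A`-algebra `C`: the subalgebra of all `x` with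
`x ⊗ 1 = 1 ⊗ x` in `C ⊗[A] C`. The paper's `A*` is the case where `C` is the integral closure of `A`
in its total ring of fractions. -/
def strictClosure (A C : Type*) [CommRing A] [CommRing C] [Algebra A C] : Subalgebra A C :=
  AlgHom.equalizer Algebra.TensorProduct.includeLeft Algebra.TensorProduct.includeRight

section StrictClosure

variable {A B C D : Type*} [CommRing A] [CommRing B] [CommRing C] [CommRing D]
  [Algebra A B] [Algebra A C] [Algebra B D]

lemma mem_strictClosure {x : C} :
    x ∈ strictClosure A C ↔ x ⊗ₜ[A] (1 : C) = (1 : C) ⊗ₜ[A] x :=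
  Iff.rfl

lemma mem_strictClosureSet {x : FractionRing A} :
    x ∈ strictClosureSet A ↔
      ∃ y ∈ strictClosure A (integralClosure A (FractionRing A)), (y : FractionRing A) = x := by
  constructor
  · rintro ⟨hx, h⟩
    exact ⟨⟨x, hx⟩, h, rfl⟩
  · rintro ⟨y, hy, rfl⟩
    exact ⟨y.2, hy⟩

variable [Algebra A D] [Algebra C D] [IsScalarTower A B D] [IsScalarTower A C D]
  (S : Submonoid A) [IsLocalization S B] [IsLocalization (Algebra.algebraMapSubmonoid C S) D]

include S in
lemma mem_strictClosure_of_isLocalization_iff {y : D} :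
    y ∈ strictClosure B D ↔ y ∈ strictClosure A D :=
  (IsLocalization.moduleTensorEquiv S B D D).injective.eq_iff.symm

include S in
lemma algebraMap_mem_strictClosure_iff {x : C} :
    algebraMap C D x ∈ strictClosure A D ↔ ∃ s ∈ S, s • x ∈ strictClosure A C := by
  let f : C →ₗ[A] D := (IsScalarTower.toAlgHom A C D).toLinearMap
  have : IsLocalizedModule S f := isLocalizedModule_iff_isLocalization.mpr inferInstance
  have hleft : TensorProduct.map f f (x ⊗ₜ 1) = algebraMap C D x ⊗ₜ 1 := by simp [f]
  have hright : TensorProduct.map f f (1 ⊗ₜ x) = 1 ⊗ₜ algebraMap C D x := by simp [f]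
  rw [mem_strictClosure, ← hleft, ← hright,
    IsLocalizedModule.eq_iff_exists S (TensorProduct.map f f), Subtype.exists]
  simp only [mem_strictClosure, Submonoid.mk_smul, TensorProduct.smul_tmul',
    TensorProduct.tmul_smul, exists_prop]

theorem mem_strictClosure_localization_iff {y : D} :
    y ∈ strictClosure B D ↔
      ∃ x ∈ strictClosure A C, ∃ s ∈ S, algebraMap A D s * y = algebraMap C D x := by
  constructor
  · intro hy
    obtain ⟨⟨x, _, s, hs, rfl⟩, hx⟩ := IsLocalization.surj (Algebra.algebraMapSubmonoid C S) y
    rw [← IsScalarTower.algebraMap_apply] at hx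
    have hxD : algebraMap C D x ∈ strictClosure A D :=
      hx ▸ mul_mem ((mem_strictClosure_of_isLocalization_iff S).mp hy) (algebraMap_mem _ s)
    obtain ⟨s', hs', hx'⟩ := (algebraMap_mem_strictClosure_iff S).mp hxD
    refine ⟨s' • x, hx', s' * s, mul_mem hs' hs, ?_⟩
    rw [Algebra.smul_def, map_mul, map_mul, ← hx, ← IsScalarTower.algebraMap_apply]
    ring
  · rintro ⟨x, hx, s, hs, hy⟩
    have hxD : algebraMap C D x ∈ strictClosure B D := by
      rw [mem_strictClosure_of_isLocalization_iff S, algebraMap_mem_strictClosure_iff S]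
      exact ⟨1, one_mem S, by rwa [one_smul]⟩
    obtain ⟨u, hu⟩ := (IsLocalization.map_units B ⟨s, hs⟩).exists_left_inv
    have hyx : y = u • algebraMap C D x := by
      rw [← hy, Algebra.smul_def, ← mul_assoc, IsScalarTower.algebraMap_apply A B D, ← map_mul, hu,
        map_one, one_mul]
    exact hyx ▸ Subalgebra.smul_mem _ hxD u

end StrictClosure

section IntegralClosure

variable (A B K L : Type*) [CommRing A] [CommRing B] [CommRing K] [CommRing L]
  [Algebra A B] [Algebra A K] [Algebra A L] [Algebra B L] [Algebra K L]
  [IsScalarTower A B L] [IsScalarTower A K L]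

/-- The canonical map from the integral closure of `A` in `K` to the integral closure of `B` in `L`
induced by `K → L`. -/
def integralClosureMap : integralClosure A K →ₐ[A] integralClosure B L :=
  ((IsScalarTower.toAlgHom A K L).comp (integralClosure A K).val).codRestrict
    ((integralClosure B L).restrictScalars A)
    fun x ↦ ((show IsIntegral A (x : K) from x.2).map (IsScalarTower.toAlgHom A K L)).tower_top

variable {A K L}

theorem mem_strictClosure_integralClosure_localization_iff (S : Submonoid A) [IsLocalization S B]
    [IsLocalization (Algebra.algebraMapSubmonoid K S) L] {ξ : L} :
    (∃ y ∈ strictClosure B (integralClosure B L), (y : L) = ξ) ↔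
      ∃ x ∈ strictClosure A (integralClosure A K), ∃ s ∈ S,
        algebraMap A L s * ξ = algebraMap K L x := by
  let : Algebra (integralClosure A K) (integralClosure B L) :=
    (integralClosureMap A B K L).toAlgebra
  have : IsScalarTower (integralClosure A K) (integralClosure B L) L := .of_algebraMap_eq' rfl
  have : IsScalarTower A (integralClosure A K) (integralClosure B L) :=
    .of_algebraMap_eq' (integralClosureMap A B K L).comp_algebraMap.symm
  have : IsLocalization (Algebra.algebraMapSubmonoid (integralClosure A K) S)
      (integralClosure B L) := IsLocalization.integralClosure (S := K) (Sf := L) (Rf := B) S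
  constructor
  · rintro ⟨y, hy, rfl⟩
    obtain ⟨x, hx, s, hs, hxy⟩ :=
      (mem_strictClosure_localization_iff (C := integralClosure A K) S).mp hy
    exact ⟨x, hx, s, hs, congrArg Subtype.val hxy⟩
  · rintro ⟨x, hx, s, hs, hxξ⟩
    have hs' : IsUnit (algebraMap A (integralClosure B L) s) := by
      rw [IsScalarTower.algebraMap_apply A B]
      exact (IsLocalization.map_units B ⟨s, hs⟩).map _
    obtain ⟨y, hy⟩ := hs'.dvd (a := algebraMap (integralClosure A K) (integralClosure B L) x)
    have hyL : algebraMap K L x = algebraMap A L s * y := congrArg Subtype.val hy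
    refine ⟨y, (mem_strictClosure_localization_iff S).mpr ⟨x, hx, s, hs, hy.symm⟩, ?_⟩
    exact (hs'.map (integralClosure B L).val).mul_left_cancel (hyL.symm.trans hxξ.symm)

lemma algebraMap_mul_eq_algebraMap_mk'_iff [IsFractionRing A K] (a : A) (t : A⁰) (s : A) (ξ : L) :
    algebraMap A L s * ξ = algebraMap K L (IsLocalization.mk' K a t) ↔
      ξ * algebraMap A L (t * s) = algebraMap A L a := by
  have ht : IsUnit (algebraMap A L t) := by
    rw [IsScalarTower.algebraMap_apply A K L]
    exact (IsLocalization.map_units K t).map _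
  have hmk : algebraMap K L (IsLocalization.mk' K a t) * algebraMap A L t = algebraMap A L a := by
    rw [IsScalarTower.algebraMap_apply A K L, ← map_mul, IsLocalization.mk'_spec,
      ← IsScalarTower.algebraMap_apply]
  rw [← ht.mul_left_inj, hmk, mul_comm _ ξ, mul_assoc, ← map_mul, mul_comm s]

end IntegralClosure

theorem strictClosure_localization_general {A B : Type*} [CommRing A] [CommRing B] [Algebra A B]
    [Ring.KrullDimLE 0 (FractionRing A)] (S : Submonoid A) [IsLocalization S B]
    (ξ : FractionRing B) :
    ξ ∈ strictClosureSet B ↔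
      ∃ (a t : A) (ht : t ∈ A⁰) (s : A), s ∈ S ∧
        IsLocalization.mk' (FractionRing A) a (⟨t, ht⟩ : A⁰) ∈ strictClosureSet A ∧
        ξ * algebraMap B (FractionRing B) (algebraMap A B (t * s)) =
          algebraMap B (FractionRing B) (algebraMap A B a) := by
  have := isLocalization_comap_nonZeroDivisors B (FractionRing B) S
  have hle := nonZeroDivisors_le_comap_nonZeroDivisors B S
  let : Algebra (FractionRing A) (FractionRing B) :=
    IsLocalization.localizationAlgebraOfSubmonoidLe _ _ _ _ hle
  have : IsScalarTower A (FractionRing A) (FractionRing B) :=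
    IsLocalization.localization_isScalarTower_of_submonoid_le _ _ _ _ hle
  have := isLocalization_algebraMapSubmonoid_fractionRing B (FractionRing A) (FractionRing B) S
  rw [mem_strictClosureSet, mem_strictClosure_integralClosure_localization_iff (A := A)
    (K := FractionRing A) B S]
  simp only [← IsScalarTower.algebraMap_apply]
  constructor
  · rintro ⟨x, hx, s, hs, h⟩
    obtain ⟨a, t, hat⟩ := IsLocalization.exists_mk'_eq A⁰ (x : FractionRing A)
    rw [← hat] at h
    exact ⟨a, t, t.2, s, hs, mem_strictClosureSet.mpr ⟨x, hx, hat.symm⟩,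
      (algebraMap_mul_eq_algebraMap_mk'_iff a t s ξ).mp h⟩
  · rintro ⟨a, t, ht, s, hs, hx, h⟩
    obtain ⟨x, hx, hxa⟩ := mem_strictClosureSet.mp hx
    refine ⟨x, hx, s, hs, ?_⟩
    rw [hxa]
    exact (algebraMap_mul_eq_algebraMap_mk'_iff a ⟨t, ht⟩ s ξ).mpr h

/-- For `A` Noetherian with `(S₁)` and `S` a multiplicatively closed subset,
`(S⁻¹A)* = S⁻¹(A*)` inside `Q(S⁻¹A)`: an element `ξ` of `Q(S⁻¹A)` lies in the strict
closure of `S⁻¹A` iff `ξ = (a/t)/s` for some `s ∈ S` and a fraction `a/t ∈ A*`. -/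
theorem strictClosure_localization (A : Type*) [CommRing A] [IsNoetherianRing A]
    (hS1 : SerreSCondition A 1) (S : Submonoid A) :
    ∀ ξ : FractionRing (Localization S),
      ξ ∈ strictClosureSet (Localization S) ↔
        ∃ (a t : A) (ht : t ∈ nonZeroDivisors A) (s : A), s ∈ S ∧
          IsLocalization.mk' (FractionRing A) a
            (⟨t, ht⟩ : nonZeroDivisors A) ∈ strictClosureSet A ∧
          ξ * algebraMap (Localization S) (FractionRing (Localization S))
              (algebraMap A (Localization S) (t * s)) =
            algebraMap (Localization S) (FractionRing (Localization S))
              (algebraMap A (Localization S) a) := by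
  have := krullDimLE_zero_of_associatedPrimes_subset_minimalPrimes (FractionRing A)
    hS1.associatedPrimes_subset_minimalPrimes
  exact strictClosure_localization_general S
end
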